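/- Let f and g be analytic on the unit disk 𝔻 with f(0) = g(0) = 0, f'(0) = g'(0) = 1, and f, g nonvanishing on the punctured disk 0 < |z| < 1. Suppose Re f'(z) > 0 and Re g'(z) > 0 for all z ∈ 𝔻. Let r₆ ≈ 0.399185 be the unique root in (0,1) of (5 − r)/(1 − r) + (6/r)·log(1 − r) = 0. Then the function F(z) = z^3/(f(z)g(z)) satisfies |F'(z)(z/F(z))^2 − 1| < 1 for every z with 0 < |z| < r₆; in particular F belongs to the class 𝒰 in the disk |z| < r₆. -/

import Mathlib

/-!
Write `p = f / z = 1 + u` and `q = g / z = 1 + v`, so that `F = z / (p q)` and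

  `F' (z / F) ^ 2 - 1 = p q - z (p q)' - 1 = -(z u' - u) - (z v' - v) - (z u' - u) v - (z v') u`.

By Carathéodory's inequality (`norm_taylorCoeff_le_two`) a function with derivative of positive real
part has Taylor coefficients bounded by `2 / n`, so that, with `r = ‖z‖`, the functions `u`, `z u'`
and `z u' - u` are bounded by `S`, `D` and `D - S`, where
`S = ∑ 2 / (m + 2) * r ^ (m + 1)` and `D = ∑ 2 (m + 1) / (m + 2) * r ^ (m + 1)`
(`exists_factor_bounds`); the same holds for `v`. Hence the quantity to be estimated is at most
`2 (D - S) + (D - S) S + D S`, which is less than `1` exactly when `2 D - S < 1`.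
The power series `2 D - S` has positive coefficients, hence is strictly increasing in `r`, and the
closed forms `S = -2 log (1 - r) / r - 2`, `D = 2 / (1 - r) + 2 log (1 - r) / r` show that
it takes the value `1` at the root `r6`.
-/

/-- The triangle inequality for circle averages, with a majorant of the integrand. -/
lemma norm_circleAverage_le_of_norm_le {h : ℂ → ℂ} {k : ℂ → ℝ} {c : ℂ} {R : ℝ}
    (hk : CircleIntegrable k c R) (hle : ∀ z ∈ Metric.sphere c |R|, ‖h z‖ ≤ k z) :
    ‖Real.circleAverage h c R‖ ≤ Real.circleAverage k c R := by
  rw [Real.circleAverage, Real.circleAverage, norm_smul, smul_eq_mul,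
    Real.norm_of_nonneg (by positivity)]
  gcongr
  refine intervalIntegral.norm_integral_le_of_norm_le Real.two_pi_pos.le ?_ hk
  exact .of_forall fun t _ => hle _ (circleMap_mem_sphere' c R t)

/-- The `n`-th Taylor coefficient of `p` at `0`, as the average of `p z / z ^ n` over a circle. -/
lemma circleAverage_mul_inv_pow {p : ℂ → ℂ} {R : ℝ} (hR : 0 < R)
    (hp : DifferentiableOn ℂ p (Metric.closedBall 0 R)) (n : ℕ) :
    Real.circleAverage (fun z => p z * (z ^ n)⁻¹) 0 R =
      (n.factorial : ℂ)⁻¹ * iteratedDeriv n p 0 := by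
  rw [Real.circleAverage_eq_circleIntegral hR.ne']
  have h := hp.circleIntegral_one_div_sub_center_pow_smul hR n
  have e : (∮ z in C(0, R), (z - 0)⁻¹ • (p z * (z ^ n)⁻¹)) =
      ∮ z in C(0, R), (1 / (z - 0) ^ (n + 1)) • p z := by
    congr 1
    ext z
    simp only [sub_zero, smul_eq_mul, one_div, pow_succ, mul_inv]
    ring
  rw [e, h]
  have := Complex.two_pi_I_ne_zero
  simp only [smul_eq_mul]
  field_simp

/-- **Carathéodory's inequality**, on a circle of radius `R < 1`: averaging `p` against `conj z ^ n`
gives `R ^ (2 * n)` times the `n`-th coefficient, averaging `conj p` against `conj z ^ n` gives `0`,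
and their sum is the average of `2 * re p` against `conj z ^ n`. -/
lemma norm_taylorCoeff_mul_pow_le {p : ℂ → ℂ} {R : ℝ} (hR : 0 < R)
    (hp : DifferentiableOn ℂ p (Metric.closedBall 0 R)) (hp0 : p 0 = 1)
    (hre : ∀ z ∈ Metric.closedBall (0 : ℂ) R, 0 < (p z).re) {n : ℕ} (hn : n ≠ 0) :
    ‖(n.factorial : ℂ)⁻¹ * iteratedDeriv n p 0‖ * R ^ n ≤ 2 := by
  have habs : |R| = R := abs_of_pos hR
  set c := (n.factorial : ℂ)⁻¹ * iteratedDeriv n p 0 with hc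
  have hsub : Metric.sphere (0 : ℂ) R ⊆ Metric.closedBall 0 R := Metric.sphere_subset_closedBall
  have hcont : ContinuousOn p (Metric.sphere 0 R) := hp.continuousOn.mono hsub
  have hconj : ContinuousOn (fun z : ℂ => (starRingEnd ℂ z) ^ n) (Metric.sphere 0 R) :=
    (Complex.continuous_conj.pow n).continuousOn
  have hci1 : CircleIntegrable (fun z => p z * (starRingEnd ℂ z) ^ n) 0 R :=
    (hcont.mul hconj).circleIntegrable hR.le
  have hci2 : CircleIntegrable (fun z => p z * z ^ n) 0 R :=
    (hcont.mul (by fun_prop)).circleIntegrable hR.le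
  have hci3 : CircleIntegrable (fun z => starRingEnd ℂ (p z * z ^ n)) 0 R :=
    (Complex.continuous_conj.comp_continuousOn (hcont.mul (by fun_prop))).circleIntegrable hR.le
  have hci4 : CircleIntegrable (fun z => (p z).re) 0 R :=
    (Complex.continuous_re.comp_continuousOn hcont).circleIntegrable hR.le
  have hmv {h : ℂ → ℂ} (hh : DifferentiableOn ℂ h (Metric.closedBall 0 R)) :
      Real.circleAverage h 0 R = h 0 := by
    apply DiffContOnCl.circleAverage
    rw [habs]
    exact (hh.mono Metric.closure_ball_subset_closedBall).diffContOnCl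
  have h1 : Real.circleAverage (fun z => p z * (starRingEnd ℂ z) ^ n) 0 R =
      (R : ℂ) ^ (2 * n) * c := by
    rw [hc, ← circleAverage_mul_inv_pow hR hp n, ← smul_eq_mul, ← Real.circleAverage_fun_smul]
    apply Real.circleAverage_congr_sphere
    intro z hz
    rw [habs] at hz
    have hz' : ‖z‖ = R := by simpa using hz
    have hz0 : z ≠ 0 := by
      rintro rfl
      simp at hz'
      exact hR.ne hz'
    have hzz : (R : ℂ) ^ 2 = z * starRingEnd ℂ z := by
      rw [Complex.mul_conj, Complex.normSq_eq_norm_sq, hz']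
      push_cast
      rfl
    simp only [smul_eq_mul]
    rw [pow_mul, hzz, mul_pow]
    field_simp
  have h2 : Real.circleAverage (fun z => starRingEnd ℂ (p z * z ^ n)) 0 R = 0 := by
    have h := Complex.conjCLE.toContinuousLinearMap.circleAverage_comp_comm hci2
    have h' := hmv (h := fun z => p z * z ^ n) (by fun_prop)
    rw [h'] at h
    simpa [hn, Function.comp_def] using h
  have h3 : Real.circleAverage (fun z => 2 * R ^ n * (p z).re) 0 R = 2 * R ^ n := by
    have h := Complex.reCLM.circleAverage_comp_comm (hcont.circleIntegrable hR.le)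
    rw [hmv hp, hp0] at h
    have h' : Real.circleAverage (fun z => (p z).re) 0 R = 1 := by
      simpa [Function.comp_def] using h
    have := Real.circleAverage_fun_smul (a := 2 * R ^ n) (f := fun z => (p z).re) (c := 0) (R := R)
    simp only [smul_eq_mul] at this
    rw [this, h', mul_one]
  have h4 : ‖(R : ℂ) ^ (2 * n) * c‖ ≤ 2 * R ^ n := by
    have hsum := Real.circleAverage_fun_add hci1 hci3
    rw [h1, h2, add_zero] at hsum
    rw [← h3, ← hsum]
    refine norm_circleAverage_le_of_norm_le ?_ ?_
    · simpa [smul_eq_mul] using hci4.const_fun_smul (a := 2 * R ^ n)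
    · intro z hz
      rw [habs] at hz
      have hz' : ‖z‖ = R := by simpa using hz
      have e : p z * (starRingEnd ℂ z) ^ n + starRingEnd ℂ (p z * z ^ n) =
          ((2 * (p z).re : ℝ) : ℂ) * (starRingEnd ℂ z) ^ n := by
        rw [map_mul, map_pow, ← add_mul, Complex.add_conj]
      rw [e, norm_mul, norm_pow, Complex.norm_conj, hz', Complex.norm_real,
        Real.norm_of_nonneg (by linarith [hre z (hsub hz)])]
      exact le_of_eq (by ring)
  rw [norm_mul, norm_pow, Complex.norm_real, Real.norm_of_nonneg hR.le, two_mul n, pow_add] at h4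
  have hRn : 0 < R ^ n := by positivity
  nlinarith

/-- **Carathéodory's inequality**: if `p` is holomorphic on the unit disk with positive real part
and `p 0 = 1`, then its nonconstant Taylor coefficients at `0` are bounded by `2`. -/
lemma norm_taylorCoeff_le_two {p : ℂ → ℂ} (hp : DifferentiableOn ℂ p (Metric.ball 0 1))
    (hp0 : p 0 = 1) (hre : ∀ z ∈ Metric.ball (0 : ℂ) 1, 0 < (p z).re) {n : ℕ} (hn : n ≠ 0) :
    ‖(n.factorial : ℂ)⁻¹ * iteratedDeriv n p 0‖ ≤ 2 := by
  set C := ‖(n.factorial : ℂ)⁻¹ * iteratedDeriv n p 0‖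
  have hlim : Filter.Tendsto (fun R : ℝ => C * R ^ n) (nhdsWithin 1 (Set.Iio 1)) (nhds C) := by
    have : Continuous (fun R : ℝ => C * R ^ n) := by fun_prop
    simpa using (this.tendsto 1).mono_left nhdsWithin_le_nhds
  refine le_of_tendsto hlim ?_
  filter_upwards [Ioo_mem_nhdsLT (zero_lt_one (α := ℝ))] with R hR
  have hsub : Metric.closedBall (0 : ℂ) R ⊆ Metric.ball 0 1 :=
    Metric.closedBall_subset_ball hR.2
  exact norm_taylorCoeff_mul_pow_le hR.1 (hp.mono hsub) hp0 (fun z hz => hre z (hsub hz)) hn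

lemma hasSum_S {r : ℝ} (h0 : 0 < r) (h1 : r < 1) :
    HasSum (fun m : ℕ => 2 / (m + 2 : ℝ) * r ^ (m + 1)) (-2 * Real.log (1 - r) / r - 2) := by
  have h := Real.hasSum_pow_div_log_of_abs_lt_one (x := r) (by rwa [abs_of_pos h0])
  rw [← hasSum_nat_add_iff' 1] at h
  convert! h.mul_left (2 / r) using 1
  · ext m
    push_cast
    field_simp
    ring
  · simp
    field_simp

lemma hasSum_D {r : ℝ} (h0 : 0 < r) (h1 : r < 1) :
    HasSum (fun m : ℕ => 2 * (m + 1) / (m + 2 : ℝ) * r ^ (m + 1))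
      (2 / (1 - r) + 2 * Real.log (1 - r) / r) := by
  have h := ((hasSum_geometric_of_lt_one h0.le h1).mul_left (2 * r)).sub (hasSum_S h0 h1)
  convert! h using 1
  · ext m
    field_simp
    ring
  · have : 1 - r ≠ 0 := by linarith
    field_simp
    ring

/-- For a function `f` of the class `ℛ`, with `u = f / z - 1` and `w = z u' = f' - f / z`: bounds of
`u`, `w` and `w - u` by the corresponding power series with coefficients `2 / n`. -/
lemma exists_factor_bounds {f : ℂ → ℂ} (hf : DifferentiableOn ℂ f (Metric.ball 0 1))
    (hf0 : f 0 = 0) (hf1 : deriv f 0 = 1) (hre : ∀ z ∈ Metric.ball (0 : ℂ) 1, 0 < (deriv f z).re)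
    {z : ℂ} (hz0 : 0 < ‖z‖) (hz1 : ‖z‖ < 1) {S D : ℝ}
    (hS : HasSum (fun m : ℕ => 2 / (m + 2 : ℝ) * ‖z‖ ^ (m + 1)) S)
    (hD : HasSum (fun m : ℕ => 2 * (m + 1) / (m + 2 : ℝ) * ‖z‖ ^ (m + 1)) D) :
    ∃ u w : ℂ, f z = z * (1 + u) ∧ deriv f z = 1 + u + w ∧
      ‖u‖ ≤ S ∧ ‖w‖ ≤ D ∧ ‖w - u‖ ≤ D - S := by
  have hzb : z ∈ Metric.ball (0 : ℂ) 1 := by simpa using hz1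
  have hz : z ≠ 0 := norm_pos_iff.mp hz0
  have hdf : DifferentiableOn ℂ (deriv f) (Metric.ball 0 1) := hf.deriv Metric.isOpen_ball
  -- `a m` is the Taylor coefficient of `f` of index `m + 2`.
  set a : ℕ → ℂ := fun m => ((m + 2).factorial : ℂ)⁻¹ * iteratedDeriv (m + 2) f 0 with ha
  have hfac (m : ℕ) : (((m + 2).factorial : ℂ))⁻¹ * (m + 2) = ((m + 1).factorial : ℂ)⁻¹ := by
    have h1 : ((m + 1).factorial : ℂ) ≠ 0 := mod_cast (m + 1).factorial_ne_zero
    have h2 : (m + 2 : ℂ) ≠ 0 := by exact_mod_cast (m + 1).succ_ne_zero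
    rw [Nat.factorial_succ (m + 1)]
    push_cast
    rw [show (m : ℂ) + 1 + 1 = m + 2 by ring]
    field_simp
  have hab (m : ℕ) : ‖a m‖ ≤ 2 / (m + 2 : ℝ) := by
    have h := norm_taylorCoeff_le_two hdf hf1 hre (n := m + 1) (by omega)
    rw [← iteratedDeriv_succ', ← hfac, mul_right_comm, norm_mul] at h
    have e : ‖(m + 2 : ℂ)‖ = (m + 2 : ℝ) := by
      have := Complex.norm_natCast (m + 2)
      push_cast at this
      exact this
    rw [e] at h
    rw [le_div_iff₀ (by positivity)]
    exact h
  have hu : HasSum (fun m => a m * z ^ (m + 1)) (f z / z - 1) := by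
    have h := Complex.hasSum_taylorSeries_on_ball hf hzb
    rw [← hasSum_nat_add_iff' 2] at h
    convert! h.mul_left z⁻¹ using 1
    · ext m
      simp only [ha, sub_zero, smul_eq_mul]
      field_simp
      ring
    · simp [Finset.sum_range_succ, hf0, hf1]
      field_simp
  have hdu : HasSum (fun m => (m + 2) * a m * z ^ (m + 1)) (deriv f z - 1) := by
    have h := Complex.hasSum_taylorSeries_on_ball hdf hzb
    rw [← hasSum_nat_add_iff' 1] at h
    convert! h using 1
    · ext m
      simp only [ha, sub_zero, smul_eq_mul, ← iteratedDeriv_succ']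
      rw [← hfac m]
      ring
    · simp [hf1]
  have hw : HasSum (fun m : ℕ => (m + 1) * a m * z ^ (m + 1)) (deriv f z - f z / z) := by
    convert! hdu.sub hu using 1
    · ext m
      ring
    · ring
  have hwu : HasSum (fun m : ℕ => m * a m * z ^ (m + 1))
      (deriv f z - f z / z - (f z / z - 1)) := by
    convert! hw.sub hu using 1
    ext m
    ring
  refine ⟨f z / z - 1, deriv f z - f z / z, by field_simp; ring, by ring, ?_, ?_, ?_⟩
  · refine hu.norm_le_of_bounded hS fun m => ?_
    rw [norm_mul, norm_pow]
    gcongr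
    exact hab m
  · refine hw.norm_le_of_bounded hD fun m => ?_
    have e : ‖(m + 1 : ℂ)‖ = (m + 1 : ℝ) := by exact_mod_cast Complex.norm_natCast (m + 1)
    rw [norm_mul, norm_pow, norm_mul, e, mul_comm (2 : ℝ), mul_div_assoc]
    gcongr
    exact hab m
  · refine hwu.norm_le_of_bounded (hD.sub hS) fun m => ?_
    have e : 2 * (m + 1) / (m + 2 : ℝ) * ‖z‖ ^ (m + 1) - 2 / (m + 2 : ℝ) * ‖z‖ ^ (m + 1) =
        m * (2 / (m + 2 : ℝ)) * ‖z‖ ^ (m + 1) := by ring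
    rw [e, norm_mul, norm_pow, norm_mul, Complex.norm_natCast]
    gcongr
    exact hab m

/-- `2 D - S` increases strictly with the radius and equals `1` at the root `R`. -/
lemma two_mul_D_sub_S_lt_one {r R : ℝ} (h0 : 0 < r) (hrR : r < R) (hR : R < 1)
    (hroot : (5 - R) / (1 - R) + (6 / R) * Real.log (1 - R) = 0) {S D : ℝ}
    (hS : HasSum (fun m : ℕ => 2 / (m + 2 : ℝ) * r ^ (m + 1)) S)
    (hD : HasSum (fun m : ℕ => 2 * (m + 1) / (m + 2 : ℝ) * r ^ (m + 1)) D) :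
    2 * D - S < 1 := by
  have hR0 : 0 < R := h0.trans hrR
  have h2 := ((hasSum_D hR0 hR).mul_left 2).sub (hasSum_S hR0 hR)
  have hval : 2 * (2 / (1 - R) + 2 * Real.log (1 - R) / R) -
      (-2 * Real.log (1 - R) / R - 2) = 1 := by
    have h1 : 1 - R ≠ 0 := by linarith
    have e : (5 - R) / (1 - R) = 4 / (1 - R) + 1 := by field_simp; ring
    rw [e] at hroot
    linear_combination hroot
  rw [hval] at h2
  have key (m : ℕ) (x : ℝ) : 2 * (2 * (m + 1) / (m + 2 : ℝ) * x ^ (m + 1)) -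
      2 / (m + 2 : ℝ) * x ^ (m + 1) = 2 * (2 * m + 1) / (m + 2 : ℝ) * x ^ (m + 1) := by ring
  refine hasSum_lt (i := 0) (fun m => ?_) ?_ ((hD.mul_left 2).sub hS) h2
  · simp only [key]
    gcongr
  · simp only [key]
    gcongr

theorem radius_univalence_R_R
    (f g F : ℂ → ℂ)
    (hfa : AnalyticOnNhd ℂ f (Metric.ball (0:ℂ) 1))
    (hga : AnalyticOnNhd ℂ g (Metric.ball (0:ℂ) 1))
    (hf0 : f 0 = 0) (hf1 : deriv f 0 = 1) (hg0 : g 0 = 0) (hg1 : deriv g 0 = 1)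
    (hfne : ∀ z : ℂ, 0 < ‖z‖ → ‖z‖ < 1 → f z ≠ 0)
    (hgne : ∀ z : ℂ, 0 < ‖z‖ → ‖z‖ < 1 → g z ≠ 0)
    (hfR : ∀ z ∈ Metric.ball (0:ℂ) 1, 0 < (deriv f z).re)
    (hgR : ∀ z ∈ Metric.ball (0:ℂ) 1, 0 < (deriv g z).re)
    (r6 : ℝ) (hr6mem : r6 ∈ Set.Ioo (0:ℝ) 1)
    (hr6root : (5 - r6) / (1 - r6) + (6 / r6) * Real.log (1 - r6) = 0)
    (hr6uniq : ∀ r ∈ Set.Ioo (0:ℝ) 1, (5 - r) / (1 - r) + (6 / r) * Real.log (1 - r) = 0 → r = r6)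
    (hF : ∀ z : ℂ, F z = z ^ 3 / (f z * g z)) :
    ∀ z : ℂ, 0 < ‖z‖ → ‖z‖ < r6 →
      ‖deriv F z * (z / F z) ^ 2 - 1‖ < 1 := by
  intro z hz0 hzr
  have hz1 : ‖z‖ < 1 := hzr.trans hr6mem.2
  have hzb : z ∈ Metric.ball (0 : ℂ) 1 := by simpa using hz1
  have hz : z ≠ 0 := norm_pos_iff.mp hz0
  have hS := hasSum_S hz0 hz1
  have hD := hasSum_D hz0 hz1
  obtain ⟨u, w, hfu, hfw, hu, hw, hwu⟩ :=
    exists_factor_bounds hfa.differentiableOn hf0 hf1 hfR hz0 hz1 hS hD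
  obtain ⟨v, y, hgv, hgy, hv, hy, hyv⟩ :=
    exists_factor_bounds hga.differentiableOn hg0 hg1 hgR hz0 hz1 hS hD
  have hlt := two_mul_D_sub_S_lt_one hz0 hzr hr6mem.2 hr6root hS hD
  set S := -2 * Real.log (1 - ‖z‖) / ‖z‖ - 2
  set D := 2 / (1 - ‖z‖) + 2 * Real.log (1 - ‖z‖) / ‖z‖
  have hfz := hfne z hz0 hz1
  have hgz := hgne z hz0 hz1
  have hfd := (hfa z hzb).differentiableAt.hasDerivAt
  have hgd := (hga z hzb).differentiableAt.hasDerivAt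
  have hFd : deriv F z = (3 * z ^ 2 * (f z * g z) -
      z ^ 3 * (deriv f z * g z + f z * deriv g z)) / (f z * g z) ^ 2 := by
    rw [show F = fun z => z ^ 3 / (f z * g z) from funext hF]
    exact (((hasDerivAt_pow 3 z).fun_div (hfd.fun_mul hgd) (mul_ne_zero hfz hgz)).deriv).trans
      (by norm_num)
  have hU : deriv F z * (z / F z) ^ 2 - 1 = -((w - u) + (y - v) + (w - u) * v + y * u) := by
    have h1 : deriv F z * (z / F z) ^ 2 = (3 * (f z * g z) -
        z * (deriv f z * g z + f z * deriv g z)) / z ^ 2 := by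
      rw [hFd, hF]
      field_simp
    rw [h1, hfw, hgy, hfu, hgv]
    field_simp
    ring
  have hS0 : 0 ≤ S := (norm_nonneg u).trans hu
  rw [hU, norm_neg]
  calc ‖(w - u) + (y - v) + (w - u) * v + y * u‖
      ≤ ‖w - u‖ + ‖y - v‖ + ‖w - u‖ * ‖v‖ + ‖y‖ * ‖u‖ := by
        rw [← norm_mul, ← norm_mul]
        exact norm_add₄_le
    _ ≤ (D - S) + (D - S) + (D - S) * S + D * S := by
        have := (norm_nonneg _).trans hwu
        have := (norm_nonneg _).trans hy
        gcongr
    _ < 1 := by nlinarith
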